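/- For every integer n ≥ 3, the quadruply-refined ASM generating function with bulk parameters related by y = x+1 satisfies the quadratic relation: Zqua_n(x,x+1;z1,z2,z3,z4)·Z_{n−2}(x,x+1) = Zadj_{n−1}(x,x+1;z4,z1)·Zadj_{n−1}(x,x+1;z2,z3) + x·z1·z2·z3·z4·Zbaradj_{n−1}(x,x+1;z1,z2)·Zbaradj_{n−1}(x,x+1;z3,z4), as an identity of polynomials in ℤ[x,z1,z2,z3,z4]. -/

import Mathlib

open Finset

/-- The `n × n` integer matrix encoded by `e`, with entries in `{-1, 0, 1}`. -/
def asmMat {n : ℕ} (e : Fin n → Fin n → Fin 3) : Fin n → Fin n → ℤ :=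
  fun i j => (e i j : ℤ) - 1

/-- `A` is an alternating sign matrix: all entries lie in `{-1, 0, 1}`, every
partial row sum and every partial column sum is `0` or `1` (equivalently, the
nonzero entries of each row and of each column alternate in sign), and every
complete row sum and column sum is `1`. -/
def IsASM {n : ℕ} (A : Fin n → Fin n → ℤ) : Prop :=
  (∀ i j, A i j = -1 ∨ A i j = 0 ∨ A i j = 1) ∧
  (∀ (i j : Fin n), (∑ j' ∈ univ.filter (fun j' : Fin n => j' ≤ j), A i j') = 0 ∨
    (∑ j' ∈ univ.filter (fun j' : Fin n => j' ≤ j), A i j') = 1) ∧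
  (∀ (i j : Fin n), (∑ i' ∈ univ.filter (fun i' : Fin n => i' ≤ i), A i' j) = 0 ∨
    (∑ i' ∈ univ.filter (fun i' : Fin n => i' ≤ i), A i' j) = 1) ∧
  (∀ i : Fin n, (∑ j, A i j) = 1) ∧
  (∀ j : Fin n, (∑ i, A i j) = 1)

/-- `ν(A)`, the number of generalized inversions of `A`. -/
def nuASM {n : ℕ} (A : Fin n → Fin n → ℤ) : ℕ :=
  (∑ i : Fin n, ∑ i' : Fin n, ∑ j : Fin n, ∑ j' : Fin n,
      if i < i' ∧ j' ≤ j then A i j * A i' j' else 0).toNat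

/-- `μ(A)`, the number of entries of `A` equal to `-1`. -/
def muASM {n : ℕ} (A : Fin n → Fin n → ℤ) : ℕ :=
  (univ.filter (fun p : Fin n × Fin n => A p.1 p.2 = -1)).card

/-- `ρT(A)`, the number of `0`'s to the left of the `1` in the top row of `A`. -/
def rhoT {n : ℕ} (A : Fin n → Fin n → ℤ) : ℕ :=
  (univ.filter (fun j : Fin n =>
    A ⟨0, j.pos⟩ j = 0 ∧ ∃ j' : Fin n, j < j' ∧ A ⟨0, j.pos⟩ j' = 1)).card

/-- `ρR(A)`, the number of `0`'s below the `1` in the right-most column of `A`. -/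
def rhoR {n : ℕ} (A : Fin n → Fin n → ℤ) : ℕ :=
  (univ.filter (fun i : Fin n =>
    A i ⟨n - 1, Nat.sub_lt i.pos Nat.one_pos⟩ = 0 ∧
      ∃ i' : Fin n, i' < i ∧ A i' ⟨n - 1, Nat.sub_lt i.pos Nat.one_pos⟩ = 1)).card

/-- `ρB(A)`, the number of `0`'s to the right of the `1` in the bottom row of `A`. -/
def rhoB {n : ℕ} (A : Fin n → Fin n → ℤ) : ℕ :=
  (univ.filter (fun j : Fin n =>
    A ⟨n - 1, Nat.sub_lt j.pos Nat.one_pos⟩ j = 0 ∧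
      ∃ j' : Fin n, j' < j ∧ A ⟨n - 1, Nat.sub_lt j.pos Nat.one_pos⟩ j' = 1)).card

/-- `ρL(A)`, the number of `0`'s above the `1` in the left-most column of `A`. -/
def rhoL {n : ℕ} (A : Fin n → Fin n → ℤ) : ℕ :=
  (univ.filter (fun i : Fin n =>
    A i ⟨0, i.pos⟩ = 0 ∧ ∃ i' : Fin n, i < i' ∧ A i' ⟨0, i.pos⟩ = 1)).card

open Classical in
/-- The quadruply-refined ASM generating function
`Zqua_n(x,y;z1,z2,z3,z4) = Σ_A x^{ν(A)} y^{μ(A)} z1^{ρT(A)} z2^{ρR(A)} z3^{ρB(A)} z4^{ρL(A)}`. -/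
noncomputable def Zqua (n : ℕ) {R : Type*} [CommRing R] (x y z1 z2 z3 z4 : R) : R :=
  ∑ e : Fin n → Fin n → Fin 3,
    if IsASM (asmMat e) then
      x ^ nuASM (asmMat e) * y ^ muASM (asmMat e) * z1 ^ rhoT (asmMat e) *
        z2 ^ rhoR (asmMat e) * z3 ^ rhoB (asmMat e) * z4 ^ rhoL (asmMat e)
    else 0

/-- Adjacent-boundary doubly-refined generating function `Zadj_n(x,y;z1,z2)`. -/
noncomputable def Zadj (n : ℕ) {R : Type*} [CommRing R] (x y z1 z2 : R) : R :=
  Zqua n x y z1 1 1 z2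

/-- Alternative adjacent-boundary doubly-refined generating function `Zbaradj_n(x,y;z1,z2)`. -/
noncomputable def Zbaradj (n : ℕ) {R : Type*} [CommRing R] (x y z1 z2 : R) : R :=
  Zqua n x y z1 z2 1 1

/-- Triply-refined generating function `Ztri_n(x,y;z1,z2,z3)`. -/
noncomputable def Ztri (n : ℕ) {R : Type*} [CommRing R] (x y z1 z2 z3 : R) : R :=
  Zqua n x y z1 1 z2 z3

/-- Opposite-boundary doubly-refined generating function `Zopp_n(x,y;z1,z2)`. -/
noncomputable def Zopp (n : ℕ) {R : Type*} [CommRing R] (x y z1 z2 : R) : R :=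
  Zqua n x y z1 1 z2 1

/-- Singly-refined generating function `Z_n(x,y;z)`. -/
noncomputable def Zsing (n : ℕ) {R : Type*} [CommRing R] (x y z : R) : R :=
  Zqua n x y z 1 1 1

/-- Unrefined generating function `Z_n(x,y)`.  Note `Zun 0 x y = 1`. -/
noncomputable def Zun (n : ℕ) {R : Type*} [CommRing R] (x y : R) : R :=
  Zqua n x y 1 1 1 1

/-! Alternating sign matrices are encoded by their corner sums (height functions). Robbins and
Rumsey's sum over interlaced pairs of height functions of consecutive sizes, with one pair of
arrays as weights, obeys the octahedron recurrence: between a height function `A` and its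
neighbours, the completions of size one larger are obtained by free choices at the entries `1` of
the matrix of `A`, and those of size one smaller by free choices at its entries `-1`. Hence Dodgson
condensation with `x` in place of `-1` computes the generating function of alternating sign
matrices in which `ν` is marked by `x` and `μ` by `x + 1`, each matrix also carrying the monomial
of an arbitrary array. The Desnanot–Jacobi identity is then the last step of the condensation, and
the quadratic relation is the case of an array whose only entries other than `1` are powers of the
`zᵢ` on its boundary: the four maximal connected minors see two adjacent sides of this boundary
each, and the central minor sees none. Condensation divides, so the relation is first proved at
positive values of the variables, where no denominator vanishes, and then extends to an identity of
polynomials.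
-/

/-! ### Height functions -/

/-- The mixed second difference of `H`: the matrix entry recovered from the corner sums `H`. -/
def entry (H : ℕ → ℕ → ℤ) (i j : ℕ) : ℤ :=
  H (i + 1) (j + 1) - H i (j + 1) - H (i + 1) j + H i j

theorem entry_swap (H : ℕ → ℕ → ℤ) (i j : ℕ) : entry (Function.swap H) i j = entry H j i := by
  simp only [entry, Function.swap]
  ring

/-- `H i j` is the sum of the entries in the first `i` rows and `j` columns of an alternating sign
matrix of size `n`, continued to an infinite matrix by the identity. The continuation puts height
functions of different sizes on the same domain. -/
structure IsHeight (n : ℕ) (H : ℕ → ℕ → ℤ) : Prop where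
  eq_min : ∀ {i j}, i = 0 ∨ j = 0 ∨ n ≤ i ∨ n ≤ j → H i j = min (i : ℤ) j
  row : ∀ i j, H i j ≤ H (i + 1) j ∧ H (i + 1) j ≤ H i j + 1
  col : ∀ i j, H i j ≤ H i (j + 1) ∧ H i (j + 1) ≤ H i j + 1

namespace IsHeight

variable {n : ℕ} {H : ℕ → ℕ → ℤ}

theorem swap (hH : IsHeight n H) : IsHeight n (Function.swap H) where
  eq_min {i j} h := by rw [Function.swap, hH.eq_min (by tauto), min_comm]
  row i j := hH.col j i
  col i j := hH.row j i

theorem zero_left (hH : IsHeight n H) (j : ℕ) : H 0 j = 0 := by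
  rw [hH.eq_min (Or.inl rfl)]
  omega

theorem zero_right (hH : IsHeight n H) (i : ℕ) : H i 0 = 0 := hH.swap.zero_left i

theorem cell_bounds (hH : IsHeight n H) (i j : ℕ) :
    (H i j ≤ H i (j + 1) ∧ H i (j + 1) ≤ H i j + 1) ∧
      (H i j ≤ H (i + 1) j ∧ H (i + 1) j ≤ H i j + 1) ∧
      (H i (j + 1) ≤ H (i + 1) (j + 1) ∧ H (i + 1) (j + 1) ≤ H i (j + 1) + 1) ∧
      (H (i + 1) j ≤ H (i + 1) (j + 1) ∧ H (i + 1) (j + 1) ≤ H (i + 1) j + 1) :=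
  ⟨hH.col i j, hH.row i j, hH.row i (j + 1), hH.col (i + 1) j⟩

theorem entry_cases (hH : IsHeight n H) (i j : ℕ) :
    entry H i j = -1 ∨ entry H i j = 0 ∨ entry H i j = 1 := by
  have := hH.cell_bounds i j
  simp only [entry]
  omega

theorem entry_of_le (hH : IsHeight n H) {i j : ℕ} (h : n ≤ i ∨ n ≤ j) :
    entry H i j = if i = j then 1 else 0 := by
  rw [entry, hH.eq_min (by omega), hH.eq_min (by omega), hH.eq_min (by omega),
    hH.eq_min (by omega)]
  split_ifs <;> omega

theorem sum_range_entry (hH : IsHeight n H) (i j : ℕ) :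
    ∑ y ∈ range j, entry H i y = H (i + 1) j - H i j := by
  have telescope := sum_range_sub (fun y => H (i + 1) y - H i y) j
  rw [hH.zero_right, hH.zero_right, sub_self, sub_zero] at telescope
  rw [← telescope]
  exact sum_congr rfl fun y _ => by simp only [entry]; ring

theorem entry_zero_eq_zero_or_one (hH : IsHeight n H) (j : ℕ) :
    entry H 0 j = 0 ∨ entry H 0 j = 1 := by
  have := hH.col 1 j
  rw [entry, hH.zero_left, hH.zero_left, zero_add]
  omega

theorem entry_last_eq_zero_or_one {m : ℕ} (hH : IsHeight (m + 1) H) {j : ℕ} (hj : j ≤ m) :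
    entry H m j = 0 ∨ entry H m j = 1 := by
  have := hH.col m j
  rw [entry, hH.eq_min (i := m + 1) (by simp), hH.eq_min (i := m + 1) (by simp)]
  omega

end IsHeight

/-! ### Alternating sign matrices and height functions -/

/-- The `n × n` matrix with height function `H`. -/
def matOf (n : ℕ) (H : ℕ → ℕ → ℤ) : Fin n → Fin n → ℤ := fun i j => entry H i j

theorem matOf_swap (n : ℕ) (H : ℕ → ℕ → ℤ) :
    matOf n (Function.swap H) = Function.swap (matOf n H) :=
  funext₂ fun i j => entry_swap H i j

theorem sum_filter_le_eq_sum_range {M : Type*} [AddCommMonoid M] {n : ℕ} (f : ℕ → M) (i : Fin n) :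
    ∑ x ∈ univ.filter (fun x : Fin n => x ≤ i), f x = ∑ x ∈ range (i + 1), f x := by
  have := Fin.sum_univ_eq_sum_range (fun y => if y ≤ (i : ℕ) then f y else 0) n
  rw [sum_filter]
  refine this.trans ?_
  rw [← sum_filter]
  congr 1
  grind

theorem IsHeight.sum_matOf {n : ℕ} {H : ℕ → ℕ → ℤ} (hH : IsHeight n H) (i : Fin n) :
    ∑ j, matOf n H i j = 1 := by
  rw [show ∑ j, matOf n H i j = _ from Fin.sum_univ_eq_sum_range (entry H i) n,
    hH.sum_range_entry, hH.eq_min (by simp), hH.eq_min (by simp)]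
  omega

theorem IsHeight.partialSum_matOf {n : ℕ} {H : ℕ → ℕ → ℤ} (hH : IsHeight n H) (i j : Fin n) :
    ∑ j' ∈ univ.filter (fun j' => j' ≤ j), matOf n H i j' = 0 ∨
      ∑ j' ∈ univ.filter (fun j' => j' ≤ j), matOf n H i j' = 1 := by
  have := hH.row i (j + 1)
  rw [show ∑ j' ∈ _, matOf n H i j' = _ from sum_filter_le_eq_sum_range (entry H i) j,
    hH.sum_range_entry]
  omega

theorem IsHeight.isASM_matOf {n : ℕ} {H : ℕ → ℕ → ℤ} (hH : IsHeight n H) :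
    IsASM (matOf n H) := by
  have partial_col := fun i j => hH.swap.partialSum_matOf j i
  have total_col := hH.swap.sum_matOf
  rw [matOf_swap] at partial_col total_col
  exact ⟨fun i j => hH.entry_cases i j, hH.partialSum_matOf, partial_col, hH.sum_matOf, total_col⟩

theorem IsASM.swap {n : ℕ} {A : Fin n → Fin n → ℤ} (hA : IsASM A) : IsASM (Function.swap A) :=
  ⟨fun i j => hA.1 j i, fun i j => hA.2.2.1 j i, fun i j => hA.2.1 j i, hA.2.2.2.2, hA.2.2.2.1⟩

/-- The extension of a matrix to `ℕ × ℕ` by the identity matrix. -/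
def extendMat {n : ℕ} (A : Fin n → Fin n → ℤ) (i j : ℕ) : ℤ :=
  if h : i < n ∧ j < n then A ⟨i, h.1⟩ ⟨j, h.2⟩ else if i = j then 1 else 0

/-- The corner sums of the extension of a matrix to `ℕ × ℕ` by the identity. -/
def cornerSum {n : ℕ} (A : Fin n → Fin n → ℤ) (i j : ℕ) : ℤ :=
  ∑ x ∈ range i, ∑ y ∈ range j, extendMat A x y

section CornerSum

variable {n : ℕ} {A : Fin n → Fin n → ℤ}

theorem extendMat_apply (A : Fin n → Fin n → ℤ) (i j : Fin n) : extendMat A i j = A i j := by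
  simp [extendMat]

theorem extendMat_of_le (A : Fin n → Fin n → ℤ) {i j : ℕ} (h : n ≤ i ∨ n ≤ j) :
    extendMat A i j = if i = j then 1 else 0 :=
  dif_neg (by omega)

theorem entry_cornerSum (A : Fin n → Fin n → ℤ) (i j : ℕ) :
    entry (cornerSum A) i j = extendMat A i j := by
  simp only [entry, cornerSum, sum_range_succ, sum_add_distrib]
  ring

theorem cornerSum_swap (A : Fin n → Fin n → ℤ) :
    cornerSum (Function.swap A) = Function.swap (cornerSum A) := by
  funext i j
  rw [cornerSum, sum_comm]
  refine sum_congr rfl fun y _ => sum_congr rfl fun x _ => ?_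
  simp only [extendMat, Function.swap, and_comm, eq_comm]

theorem cornerSum_succ_right (A : Fin n → Fin n → ℤ) (i j : ℕ) :
    cornerSum A i (j + 1) = cornerSum A i j + ∑ x ∈ range i, extendMat A x j := by
  simp only [cornerSum, sum_range_succ, sum_add_distrib]

theorem IsASM.sum_range_extendMat_of_le (hA : IsASM A) {i j : ℕ} (h : n ≤ i ∨ n ≤ j) :
    ∑ x ∈ range i, extendMat A x j = if j < i then 1 else 0 := by
  rcases le_or_gt n j with hj | hj
  · simp [extendMat_of_le A (Or.inr hj)]
  have hi : n ≤ i := by omega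
  have total : ∑ x ∈ range n, extendMat A x j = 1 := by
    rw [← Fin.sum_univ_eq_sum_range (extendMat A · j), ← hA.2.2.2.2 ⟨j, hj⟩]
    exact sum_congr rfl fun x _ => extendMat_apply A x ⟨j, hj⟩
  rw [if_pos (by omega), ← total]
  refine (sum_subset (range_mono hi) fun x _ hx => ?_).symm
  rw [mem_range, not_lt] at hx
  rw [extendMat_of_le A (Or.inl hx), if_neg (by omega)]

theorem IsASM.sum_range_extendMat_eq_zero_or_one (hA : IsASM A) (i j : ℕ) :
    ∑ x ∈ range i, extendMat A x j = 0 ∨ ∑ x ∈ range i, extendMat A x j = 1 := by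
  by_cases h : n ≤ i ∨ n ≤ j
  · rw [hA.sum_range_extendMat_of_le h]
    split_ifs <;> simp
  rcases i with _ | i
  · simp
  have inside := hA.2.2.1 ⟨i, by omega⟩ ⟨j, by omega⟩
  simp only [← extendMat_apply] at inside
  rwa [sum_filter_le_eq_sum_range (extendMat A · j) ⟨i, by omega⟩] at inside

theorem IsASM.cornerSum_of_le (hA : IsASM A) {i : ℕ} (hi : n ≤ i) (j : ℕ) :
    cornerSum A i j = min (i : ℤ) j := by
  induction j with
  | zero => simp [cornerSum]
  | succ j ih =>
    rw [cornerSum_succ_right, ih, hA.sum_range_extendMat_of_le (Or.inl hi)]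
    split_ifs <;> omega

theorem IsASM.cornerSum_step (hA : IsASM A) (i j : ℕ) :
    cornerSum A i j ≤ cornerSum A i (j + 1) ∧ cornerSum A i (j + 1) ≤ cornerSum A i j + 1 := by
  have := hA.sum_range_extendMat_eq_zero_or_one i j
  rw [cornerSum_succ_right]
  omega

theorem IsASM.isHeight_cornerSum (hA : IsASM A) : IsHeight n (cornerSum A) := by
  have swapped : ∀ i j, cornerSum (Function.swap A) i j = cornerSum A j i := by
    simp [cornerSum_swap, Function.swap]
  refine ⟨?_, fun i j => ?_, hA.cornerSum_step⟩
  · rintro i j (rfl | rfl | h | h)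
    · simp [cornerSum]
    · simp [cornerSum]
    · exact hA.cornerSum_of_le h j
    · rw [← swapped, hA.swap.cornerSum_of_le h, min_comm]
  · simpa only [swapped] using hA.swap.cornerSum_step j i

theorem matOf_cornerSum (A : Fin n → Fin n → ℤ) : matOf n (cornerSum A) = A := by
  funext i j
  rw [matOf, entry_cornerSum, extendMat_apply]

theorem IsHeight.cornerSum_matOf {H : ℕ → ℕ → ℤ} (hH : IsHeight n H) :
    cornerSum (matOf n H) = H := by
  have extend_eq : ∀ i j, extendMat (matOf n H) i j = entry H i j := by
    intro i j
    by_cases h : i < n ∧ j < n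
    · simp [extendMat, h, matOf]
    · rw [extendMat_of_le _ (by omega), hH.entry_of_le (by omega)]
  funext i j
  simp only [cornerSum, extend_eq, hH.sum_range_entry]
  rw [sum_range_sub (H · j), hH.zero_left, sub_zero]

end CornerSum

theorem asmMat_injective (n : ℕ) : Function.Injective (asmMat (n := n)) := by
  intro e e' h
  funext i j
  have := congrFun₂ h i j
  simp only [asmMat] at this
  omega

theorem IsASM.exists_asmMat_eq {n : ℕ} {A : Fin n → Fin n → ℤ} (hA : IsASM A) :
    ∃ e, asmMat e = A := by
  refine ⟨fun i j => Fin.ofNat 3 (A i j + 1).toNat, funext₂ fun i j => ?_⟩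
  rcases hA.1 i j with h | h | h <;> rw [asmMat, h] <;> rfl

open Classical in
/-- The finite set of height functions of size `n`. -/
noncomputable def heights (n : ℕ) : Finset (ℕ → ℕ → ℤ) :=
  (univ.filter fun e : Fin n → Fin n → Fin 3 => IsASM (asmMat e)).image
    fun e => cornerSum (asmMat e)

@[simp]
theorem mem_heights {n : ℕ} {H : ℕ → ℕ → ℤ} : H ∈ heights n ↔ IsHeight n H := by
  simp only [heights, mem_image, mem_filter, mem_univ, true_and]
  constructor
  · rintro ⟨e, he, rfl⟩
    exact he.isHeight_cornerSum
  · intro hH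
    obtain ⟨e, he⟩ := hH.isASM_matOf.exists_asmMat_eq
    exact ⟨e, he ▸ hH.isASM_matOf, by rw [he, hH.cornerSum_matOf]⟩

open Classical in
theorem sum_isASM_eq_sum_heights {M : Type*} [AddCommMonoid M] (n : ℕ)
    (F : (Fin n → Fin n → ℤ) → M) :
    (∑ e : Fin n → Fin n → Fin 3, if IsASM (asmMat e) then F (asmMat e) else 0) =
      ∑ H ∈ heights n, F (matOf n H) := by
  have inj : Function.Injective fun e : Fin n → Fin n → Fin 3 => cornerSum (asmMat e) :=
    (Function.LeftInverse.injective matOf_cornerSum).comp (asmMat_injective n)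
  rw [heights, sum_image inj.injOn, sum_filter]
  simp only [matOf_cornerSum]

/-! ### Interlaced pairs of height functions -/

/-- The compatibility of the height functions `B` and `A` of matrices of consecutive sizes, the
matrix of `B` being the smaller one. -/
def Interlaced (B A : ℕ → ℕ → ℤ) : Prop :=
  ∀ i j, A i j ≤ B i j ∧ A (i + 1) (j + 1) ≤ B i j + 1 ∧ B i j ≤ A (i + 1) j ∧ B i j ≤ A i (j + 1)

/-- Translation by `(1, 1)`, with zeros in the new row and column. -/
def shift (X : ℕ → ℕ → ℤ) : ℕ → ℕ → ℤ
  | 0, _ => 0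
  | _ + 1, 0 => 0
  | i + 1, j + 1 => X i j

/-- Removal of the first row and column. -/
def unshift {α : Type*} (a : ℕ → ℕ → α) (i j : ℕ) : α := a (i + 1) (j + 1)

/-- The indicator function of a set of cells. -/
def cellInd (s : Finset (ℕ × ℕ)) (i j : ℕ) : ℤ := if (i, j) ∈ s then 1 else 0

/-- The cells of the `n × n` window where the matrix entry of `A` is `c`. -/
def cells (n : ℕ) (c : ℤ) (A : ℕ → ℕ → ℤ) : Finset (ℕ × ℕ) :=
  (range n ×ˢ range n).filter fun p => entry A p.1 p.2 = c

/-- The translate by `(-1, -1)` of the largest height function interlacing with `A` from above. -/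
def maxAbove (A : ℕ → ℕ → ℤ) (i j : ℕ) : ℤ := min (A (i + 1) (j + 1)) (A i j + 1)

/-- The smallest height function interlacing with `A` from below. -/
def minBelow (A : ℕ → ℕ → ℤ) (i j : ℕ) : ℤ := max (A i j) (A (i + 1) (j + 1) - 1)

theorem shift_add (X Y : ℕ → ℕ → ℤ) : shift (X + Y) = shift X + shift Y := by
  funext i j
  rcases i with _ | i <;> rcases j with _ | j <;> simp [shift]

theorem shift_sub (X Y : ℕ → ℕ → ℤ) : shift (X - Y) = shift X - shift Y := by
  funext i j
  rcases i with _ | i <;> rcases j with _ | j <;> simp [shift]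

theorem shift_injective : Function.Injective shift := fun _ _ h =>
  funext₂ fun i j => congrFun₂ h (i + 1) (j + 1)

theorem IsHeight.shift_unshift {n : ℕ} {H : ℕ → ℕ → ℤ} (hH : IsHeight n H) :
    shift (unshift H) = H := by
  funext i j
  rcases i with _ | i
  · exact (hH.zero_left j).symm
  rcases j with _ | j
  · exact (hH.zero_right (i + 1)).symm
  · rfl

theorem IsHeight.add_shift {n : ℕ} {A : ℕ → ℕ → ℤ} (hA : IsHeight n A) :
    A + shift A = shift (maxAbove A) + shift (minBelow A) := by
  nth_rw 1 [← hA.shift_unshift]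
  rw [← shift_add, ← shift_add]
  congr 1
  funext i j
  simp only [Pi.add_apply, unshift, maxAbove, minBelow]
  omega

theorem cellInd_injective : Function.Injective cellInd := by
  intro s t h
  ext ⟨i, j⟩
  have := congrFun₂ h i j
  grind [cellInd]

theorem cellInd_empty : cellInd ∅ = 0 := by
  funext i j
  simp [cellInd]

theorem cellInd_insert {p : ℕ × ℕ} {s : Finset (ℕ × ℕ)} (hp : p ∉ s) :
    cellInd (insert p s) = cellInd {p} + cellInd s := by
  funext i j
  simp only [cellInd, Pi.add_apply]
  grind

theorem exists_eq_cellInd_iff {f : ℕ → ℕ → ℤ} {t : Finset (ℕ × ℕ)} :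
    (∃ s ⊆ t, cellInd s = f) ↔ ∀ i j, f i j = 0 ∨ ((i, j) ∈ t ∧ f i j = 1) := by
  constructor
  · rintro ⟨s, hs, rfl⟩ i j
    by_cases h : (i, j) ∈ s
    · exact Or.inr ⟨hs h, if_pos h⟩
    · exact Or.inl (if_neg h)
  · intro hf
    refine ⟨t.filter fun p => f p.1 p.2 = 1, filter_subset _ _, funext₂ fun i j => ?_⟩
    have := hf i j
    grind [cellInd]

theorem mem_cells {n : ℕ} {c : ℤ} {A : ℕ → ℕ → ℤ} {i j : ℕ} :
    (i, j) ∈ cells n c A ↔ (i < n ∧ j < n) ∧ entry A i j = c := by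
  simp [cells]

theorem cells_subset (n : ℕ) (c : ℤ) (A : ℕ → ℕ → ℤ) : cells n c A ⊆ range n ×ˢ range n :=
  filter_subset _ _

theorem Interlaced.isHeight_left {m : ℕ} {A B : ℕ → ℕ → ℤ} (hBA : Interlaced B A)
    (hA : IsHeight (m + 1) A) : IsHeight m B where
  eq_min {i j} h := by
    have := hBA i j
    have := hA.cell_bounds i j
    have boundary := fun i j => @IsHeight.eq_min _ _ hA i j
    have := boundary i j
    have := boundary i (j + 1)
    have := boundary (i + 1) j
    have := boundary (i + 1) (j + 1)
    rcases h with rfl | rfl | h | h <;> grind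
  row i j := by
    have := hBA i j
    have := hBA (i + 1) j
    omega
  col i j := by
    have := hBA i j
    have := hBA i (j + 1)
    omega

theorem Interlaced.isHeight_shift {n : ℕ} {A D : ℕ → ℕ → ℤ} (hAD : Interlaced A (shift D))
    (hA : IsHeight n A) (diag : ∀ i, n ≤ i → D i i = i + 1) : IsHeight (n + 1) (shift D) where
  eq_min {i j} h := by
    rcases i with _ | i <;> rcases j with _ | j
    · simp [shift]
    · simp only [shift]
      omega
    · simp only [shift]
      omega
    have lower := hAD i j
    have upper := hAD (i + 1) (j + 1)
    have upper_row := hAD i (j + 1)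
    have upper_col := hAD (i + 1) j
    have := diag i
    rw [hA.eq_min (by omega)] at lower upper upper_row upper_col
    simp only [shift] at *
    rcases eq_or_ne i j with rfl | hij <;> omega
  row i j := by
    rcases j with _ | j
    · rcases i <;> simp [shift]
    · have := hAD i (j + 1)
      have := hAD i j
      omega
  col i j := by
    rcases i with _ | i
    · simp [shift]
    · have := hAD (i + 1) j
      have := hAD i j
      omega

theorem IsHeight.interlaced_iff {m : ℕ} {A : ℕ → ℕ → ℤ} (hA : IsHeight (m + 1) A)
    (B : ℕ → ℕ → ℤ) :
    Interlaced B A ↔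
      ∀ i j, (B - minBelow A) i j = 0 ∨
        ((i, j) ∈ cells (m + 1) (-1) A ∧ (B - minBelow A) i j = 1) := by
  refine forall₂_congr fun i j => ?_
  have cell := hA.cell_bounds i j
  have outside := hA.entry_of_le (i := i) (j := j)
  simp only [mem_cells, Pi.sub_apply, minBelow, entry] at *
  constructor
  · intro hB
    split_ifs at outside <;> omega
  · omega

theorem IsHeight.interlaced_shift_iff {n : ℕ} {A : ℕ → ℕ → ℤ} (hA : IsHeight n A)
    (D : ℕ → ℕ → ℤ) :
    Interlaced A (shift D) ↔
      ∀ i j, A i (j + 1) ≤ D i j ∧ A (i + 1) j ≤ D i j ∧ D i j ≤ A (i + 1) (j + 1) ∧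
        D i j ≤ A i j + 1 := by
  constructor
  · intro hAD i j
    exact ⟨(hAD i (j + 1)).2.2.1, (hAD (i + 1) j).2.2.2, (hAD (i + 1) (j + 1)).1, (hAD i j).2.1⟩
  · intro hD i j
    have zero_left := hA.zero_left
    have zero_right := hA.zero_right
    have := hA.cell_bounds i j
    rcases i with _ | i <;> rcases j with _ | j <;> grind [shift]

theorem IsHeight.isHeight_shift_iff {n : ℕ} {A : ℕ → ℕ → ℤ} (hA : IsHeight n A)
    (D : ℕ → ℕ → ℤ) :
    IsHeight (n + 1) (shift D) ∧ Interlaced A (shift D) ↔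
      ∀ i j, (maxAbove A - D) i j = 0 ∨ ((i, j) ∈ cells n 1 A ∧ (maxAbove A - D) i j = 1) := by
  simp only [mem_cells, Pi.sub_apply, maxAbove]
  constructor
  · rintro ⟨hD, hAD⟩ i j
    have boundary := hD.eq_min (i := i + 1) (j := j + 1)
    have := hA.eq_min (i := i + 1) (j := j + 1)
    have := hA.eq_min (i := i) (j := j)
    have := hA.cell_bounds i j
    have := (hA.interlaced_shift_iff D).1 hAD i j
    simp only [shift, entry] at *
    omega
  · intro hD
    have hAD : Interlaced A (shift D) := (hA.interlaced_shift_iff D).2 fun i j => by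
      have := hA.cell_bounds i j
      have := hD i j
      simp only [entry] at this
      omega
    refine ⟨hAD.isHeight_shift hA fun i hi => ?_, hAD⟩
    have := hD i i
    have := hA.eq_min (i := i) (j := i) (by omega)
    have := hA.eq_min (i := i + 1) (j := i + 1) (by omega)
    omega

open Classical in
theorem IsHeight.sum_interlaced_below {M : Type*} [AddCommMonoid M] {m : ℕ} {A : ℕ → ℕ → ℤ}
    (hA : IsHeight (m + 1) A) (F : (ℕ → ℕ → ℤ) → M) :
    ∑ B ∈ heights m with Interlaced B A, F B =
      ∑ s ∈ (cells (m + 1) (-1) A).powerset, F (minBelow A + cellInd s) := by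
  have below_eq : (heights m).filter (Interlaced · A) =
      (cells (m + 1) (-1) A).powerset.image fun s => minBelow A + cellInd s := by
    ext B
    simp only [mem_filter, mem_heights, mem_image, mem_powerset, ← eq_sub_iff_add_eq',
      exists_eq_cellInd_iff, ← hA.interlaced_iff]
    exact ⟨And.right, fun hBA => ⟨hBA.isHeight_left hA, hBA⟩⟩
  rw [below_eq, sum_image fun s _ t _ h => cellInd_injective (add_left_cancel h)]

open Classical in
theorem IsHeight.sum_interlaced_above {M : Type*} [AddCommMonoid M] {n : ℕ} {A : ℕ → ℕ → ℤ}
    (hA : IsHeight n A) (F : (ℕ → ℕ → ℤ) → M) :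
    ∑ C ∈ heights (n + 1) with Interlaced A C, F C =
      ∑ s ∈ (cells n 1 A).powerset, F (shift (maxAbove A - cellInd s)) := by
  have above_eq : (heights (n + 1)).filter (Interlaced A) =
      (cells n 1 A).powerset.image fun s => shift (maxAbove A - cellInd s) := by
    ext C
    simp only [mem_filter, mem_heights, mem_image, mem_powerset]
    constructor
    · rintro ⟨hC, hAC⟩
      obtain ⟨D, rfl⟩ : ∃ D, shift D = C := ⟨_, hC.shift_unshift⟩
      obtain ⟨s, hs, hsC⟩ := exists_eq_cellInd_iff.2 ((hA.isHeight_shift_iff _).1 ⟨hC, hAC⟩)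
      exact ⟨s, hs, by rw [hsC, sub_sub_cancel]⟩
    · rintro ⟨s, hs, rfl⟩
      refine (hA.isHeight_shift_iff _).2 (exists_eq_cellInd_iff.1 ⟨s, hs, ?_⟩)
      rw [sub_sub_cancel]
  rw [above_eq, sum_image fun s _ t _ h => cellInd_injective (sub_right_injective
    (shift_injective h))]

theorem IsHeight.isHeight_minBelow_add {m : ℕ} {A : ℕ → ℕ → ℤ} (hA : IsHeight (m + 1) A)
    {s : Finset (ℕ × ℕ)} (hs : s ⊆ cells (m + 1) (-1) A) : IsHeight m (minBelow A + cellInd s) := by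
  refine Interlaced.isHeight_left ((hA.interlaced_iff _).2 ?_) hA
  exact exists_eq_cellInd_iff.1 ⟨s, hs, by rw [add_sub_cancel_left]⟩

theorem IsHeight.isHeight_minBelow {m : ℕ} {A : ℕ → ℕ → ℤ} (hA : IsHeight (m + 1) A) :
    IsHeight m (minBelow A) := by
  simpa only [cellInd_empty, add_zero] using hA.isHeight_minBelow_add (empty_subset _)

/-- The number of cells `(i, j)` of the `m × m` window with `B i j = A (i + 1) (j + 1)`: the
exponent of `λ` contributed by an interlaced pair. -/
def tightCount (m : ℕ) (B A : ℕ → ℕ → ℤ) : ℕ :=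
  ((range m ×ˢ range m).filter fun p => B p.1 p.2 = A (p.1 + 1) (p.2 + 1)).card

/-- The number of cells of the `n × n` window around which `A` is constant. -/
def flatCount (n : ℕ) (A : ℕ → ℕ → ℤ) : ℕ := tightCount n A A

theorem tightCount_eq_flatCount_add_card {n : ℕ} {A X Y : ℕ → ℕ → ℤ} {s : Finset (ℕ × ℕ)}
    (hs : s ⊆ range n ×ˢ range n) (not_flat : ∀ i j, (i, j) ∈ s → A i j ≠ A (i + 1) (j + 1))
    (tight_iff : ∀ i j, i < n → j < n →
      (X i j = Y (i + 1) (j + 1) ↔ A i j = A (i + 1) (j + 1) ∨ (i, j) ∈ s)) :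
    tightCount n X Y = flatCount n A + s.card := by
  rw [flatCount, tightCount, tightCount, ← card_union_of_disjoint]
  · congr 1
    ext ⟨i, j⟩
    have := @hs (i, j)
    have := tight_iff i j
    simp only [mem_filter, mem_union, mem_product, mem_range] at *
    tauto
  · rw [disjoint_left]
    rintro ⟨i, j⟩ flat mem
    exact not_flat i j mem (mem_filter.1 flat).2

theorem IsHeight.tightCount_above {n : ℕ} {A : ℕ → ℕ → ℤ} (hA : IsHeight n A)
    {s : Finset (ℕ × ℕ)} (hs : s ⊆ cells n 1 A) :
    tightCount n A (shift (maxAbove A - cellInd s)) = flatCount n A + s.card := by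
  refine tightCount_eq_flatCount_add_card (hs.trans (cells_subset _ _ _)) (fun i j h => ?_)
    fun i j _ _ => ?_
  · have := hA.cell_bounds i j
    have := (mem_cells.1 (hs h)).2
    grind [entry]
  · have := hA.cell_bounds i j
    have plus : (i, j) ∈ s → entry A i j = 1 := fun h => (mem_cells.1 (hs h)).2
    simp only [shift, maxAbove, cellInd, Pi.sub_apply, entry] at *
    grind

theorem tightCount_succ {m : ℕ} {A B : ℕ → ℕ → ℤ} (hB : IsHeight m B)
    (hA : IsHeight (m + 1) A) : tightCount (m + 1) B A = tightCount m B A := by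
  rw [tightCount, tightCount]
  congr 1
  ext ⟨i, j⟩
  have := hB.eq_min (i := i) (j := j)
  have := hA.eq_min (i := i + 1) (j := j + 1)
  simp only [mem_filter, mem_product, mem_range]
  omega

theorem IsHeight.tightCount_below {m : ℕ} {A : ℕ → ℕ → ℤ} (hA : IsHeight (m + 1) A)
    {s : Finset (ℕ × ℕ)} (hs : s ⊆ cells (m + 1) (-1) A) :
    tightCount m (minBelow A + cellInd s) A = flatCount (m + 1) A + s.card := by
  rw [← tightCount_succ (hA.isHeight_minBelow_add hs) hA]
  refine tightCount_eq_flatCount_add_card (hs.trans (cells_subset _ _ _)) (fun i j h => ?_)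
    fun i j _ _ => ?_
  · have := hA.cell_bounds i j
    have := (mem_cells.1 (hs h)).2
    grind [entry]
  · have := hA.cell_bounds i j
    have minus : (i, j) ∈ s → entry A i j = -1 := fun h => (mem_cells.1 (hs h)).2
    simp only [minBelow, cellInd, Pi.add_apply, entry] at *
    grind

/-! ### Weights of height functions -/

section Weight

variable {K : Type*} [Field K]

/-- The monomial `∏ a_{ij} ^ A_{ij}` of the matrix `A` of size `n` with height function `X`. -/
def weight (n : ℕ) (a : ℕ → ℕ → K) (X : ℕ → ℕ → ℤ) : K :=
  ∏ i ∈ range n, ∏ j ∈ range n, a i j ^ entry X i j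

/-- The cross ratio of the `2 × 2` block of `a` at a cell. -/
def crossRatio (a : ℕ → ℕ → K) (p : ℕ × ℕ) : K :=
  a p.1 p.2 * a (p.1 + 1) (p.2 + 1) / (a (p.1 + 1) p.2 * a p.1 (p.2 + 1))

theorem weight_mul (n : ℕ) (a b : ℕ → ℕ → K) (X : ℕ → ℕ → ℤ) :
    weight n (a * b) X = weight n a X * weight n b X := by
  simp only [weight, Pi.mul_apply, ← prod_mul_distrib, mul_zpow]

theorem weight_inv (n : ℕ) (a : ℕ → ℕ → K) (X : ℕ → ℕ → ℤ) :
    weight n a⁻¹ X = (weight n a X)⁻¹ := by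
  simp only [weight, Pi.inv_apply, inv_zpow, prod_inv_distrib]

theorem weight_swap (n : ℕ) (a : ℕ → ℕ → K) (X : ℕ → ℕ → ℤ) :
    weight n (Function.swap a) (Function.swap X) = weight n a X := by
  simp only [weight, entry_swap, Function.swap]
  exact prod_comm

theorem prod_zpow_single (a : ℕ → ℕ → K) {n k l : ℕ} (hk : k < n) (hl : l < n) :
    ∏ i ∈ range n, ∏ j ∈ range n, a i j ^ (if i = k ∧ j = l then (1 : ℤ) else 0) = a k l := by
  rw [prod_eq_single_of_mem k (mem_range.2 hk), prod_eq_single_of_mem l (mem_range.2 hl)]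
  · simp
  · intro j _ hj
    simp [hj]
  · intro i _ hi
    simp [hi]

theorem weight_shift (a : ℕ → ℕ → K) {n m : ℕ} {X : ℕ → ℕ → ℤ} (hX : IsHeight m X) :
    weight (n + 1) a (shift X) = weight n (unshift a) X := by
  have top : ∀ j, entry (shift X) 0 j = 0 := by
    rintro (_ | j) <;> simp [entry, shift, hX.zero_left]
  have left : ∀ i, entry (shift X) i 0 = 0 := by
    rintro (_ | i) <;> simp [entry, shift, hX.zero_right]
  simp only [weight]
  rw [prod_range_succ', prod_eq_one (s := range (n + 1)) fun j _ => by rw [top, zpow_zero],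
    mul_one]
  refine prod_congr rfl fun i _ => ?_
  rw [prod_range_succ', left, zpow_zero, mul_one]
  rfl

theorem weight_succ (a : ℕ → ℕ → K) {n : ℕ} {X : ℕ → ℕ → ℤ} (hX : IsHeight n X) :
    weight (n + 1) a X = weight n a X * a n n := by
  have bottom : ∏ j ∈ range (n + 1), a n j ^ entry X n j = a n n := by
    simp [hX.entry_of_le (Or.inl le_rfl)]
  rw [weight, prod_range_succ, bottom, weight]
  congr 1
  refine prod_congr rfl fun i hi => ?_
  rw [prod_range_succ, hX.entry_of_le (Or.inr le_rfl), if_neg (mem_range.1 hi).ne, zpow_zero,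
    mul_one]

theorem weight_shift_add_two (a : ℕ → ℕ → K) {m : ℕ} {B : ℕ → ℕ → ℤ} (hB : IsHeight m B) :
    weight (m + 2) a (shift B) = weight m (unshift a) B * a (m + 1) (m + 1) := by
  rw [weight_shift a hB, weight_succ _ hB, unshift]

theorem weight_mul_prod_cells {n : ℕ} {A : ℕ → ℕ → ℤ} (hA : IsHeight n A) {f : ℕ → ℕ → K}
    (hf : ∀ i j, f i j ≠ 0) :
    weight n f A * ∏ p ∈ cells n (-1) A, f p.1 p.2 = ∏ p ∈ cells n 1 A, f p.1 p.2 := by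
  simp only [weight, cells]
  rw [prod_filter, prod_filter, prod_product, prod_product]
  simp only [← prod_mul_distrib]
  refine prod_congr rfl fun i _ => prod_congr rfl fun j _ => ?_
  rcases hA.entry_cases i j with h | h | h <;> simp [h, hf]

section NonvanishingArray

variable {a : ℕ → ℕ → K} (ha : ∀ i j, a i j ≠ 0)
include ha

theorem weight_ne_zero (n : ℕ) (X : ℕ → ℕ → ℤ) : weight n a X ≠ 0 :=
  prod_ne_zero_iff.2 fun i _ => prod_ne_zero_iff.2 fun j _ => zpow_ne_zero _ (ha i j)

theorem weight_add (n : ℕ) (X Y : ℕ → ℕ → ℤ) :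
    weight n a (X + Y) = weight n a X * weight n a Y := by
  simp only [weight, ← prod_mul_distrib]
  refine prod_congr rfl fun i _ => prod_congr rfl fun j _ => ?_
  rw [← zpow_add₀ (ha i j)]
  congr 1
  simp only [entry, Pi.add_apply]
  ring

theorem weight_sub (n : ℕ) (X Y : ℕ → ℕ → ℤ) :
    weight n a (X - Y) = weight n a X * (weight n a Y)⁻¹ := by
  rw [eq_mul_inv_iff_mul_eq₀ (weight_ne_zero ha n Y), ← weight_add ha, sub_add_cancel]

theorem weight_shift_cellInd_singleton {n k l : ℕ} (hk : k < n) (hl : l < n) :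
    weight (n + 1) a (shift (cellInd {(k, l)})) = crossRatio a (k, l) := by
  have entry_eq : ∀ i j, entry (shift (cellInd {(k, l)})) i j =
      (if i = k ∧ j = l then 1 else 0) + (if i = k + 1 ∧ j = l + 1 then 1 else 0)
        - ((if i = k + 1 ∧ j = l then 1 else 0) + (if i = k ∧ j = l + 1 then 1 else 0)) := by
    rintro (_ | i) (_ | j) <;>
      simp only [entry, shift, cellInd, mem_singleton, Prod.mk.injEq] <;> grind
  simp only [weight, crossRatio, entry_eq]
  simp_rw [zpow_sub₀ (ha _ _), zpow_add₀ (ha _ _), prod_div_distrib, prod_mul_distrib]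
  rw [prod_zpow_single a, prod_zpow_single a, prod_zpow_single a, prod_zpow_single a] <;> omega

theorem weight_shift_cellInd {n : ℕ} {s : Finset (ℕ × ℕ)} (hs : s ⊆ range n ×ˢ range n) :
    weight (n + 1) a (shift (cellInd s)) = ∏ p ∈ s, crossRatio a p := by
  induction s using Finset.induction_on with
  | empty =>
    have entry_eq : ∀ i j, entry (shift (cellInd ∅)) i j = 0 := by
      rintro (_ | i) (_ | j) <;> simp [entry, shift, cellInd_empty]
    simp [weight, entry_eq]
  | insert p s hp ih =>
    obtain ⟨k, l⟩ := p
    have mem := hs (mem_insert_self _ s)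
    rw [mem_product, mem_range, mem_range] at mem
    rw [cellInd_insert hp, shift_add, weight_add ha, ih ((subset_insert _ s).trans hs),
      prod_insert hp, weight_shift_cellInd_singleton ha mem.1 mem.2]

theorem weight_mul_weight_unshift {m : ℕ} {A : ℕ → ℕ → ℤ} (hA : IsHeight (m + 1) A) :
    weight (m + 1) a A * weight (m + 1) (unshift a) A =
      weight (m + 2) a (shift (maxAbove A)) * weight m (unshift a) (minBelow A) := by
  have h := congrArg (weight (m + 2) a) hA.add_shift
  rw [weight_add ha, weight_add ha, weight_shift_add_two a hA.isHeight_minBelow,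
    weight_shift a hA, weight_succ a hA, mul_right_comm, ← mul_assoc] at h
  exact mul_right_cancel₀ (ha _ _) h

theorem weight_minBelow_add {m : ℕ} {A : ℕ → ℕ → ℤ} (hA : IsHeight (m + 1) A)
    {s : Finset (ℕ × ℕ)} (hs : s ⊆ cells (m + 1) (-1) A) :
    weight m (unshift a) (minBelow A + cellInd s) =
      weight m (unshift a) (minBelow A) * ∏ p ∈ s, crossRatio a p := by
  refine mul_right_cancel₀ (ha (m + 1) (m + 1)) ?_
  rw [← weight_shift_add_two a (hA.isHeight_minBelow_add hs), shift_add, weight_add ha,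
    weight_shift_cellInd ha (hs.trans (cells_subset _ _ _)),
    weight_shift_add_two a hA.isHeight_minBelow, mul_right_comm]

open Classical in
theorem sum_interlaced_below_weight (c : K) {m : ℕ} {A : ℕ → ℕ → ℤ} (hA : IsHeight (m + 1) A) :
    ∑ B ∈ heights m with Interlaced B A, c ^ tightCount m B A * (weight m (unshift a) B)⁻¹ =
      c ^ flatCount (m + 1) A * (weight m (unshift a) (minBelow A))⁻¹ *
        ∏ p ∈ cells (m + 1) (-1) A, (1 + c * (crossRatio a p)⁻¹) := by
  rw [hA.sum_interlaced_below, prod_one_add, mul_sum]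
  refine sum_congr rfl fun s hs => ?_
  rw [mem_powerset] at hs
  rw [weight_minBelow_add ha hA hs, hA.tightCount_below hs, prod_mul_distrib, prod_const,
    prod_inv_distrib, mul_inv, pow_add]
  ring

open Classical in
theorem sum_interlaced_above_weight (c : K) {n : ℕ} {A : ℕ → ℕ → ℤ} (hA : IsHeight n A) :
    ∑ C ∈ heights (n + 1) with Interlaced A C, c ^ tightCount n A C * weight (n + 1) a C =
      c ^ flatCount n A * weight (n + 1) a (shift (maxAbove A)) *
        ∏ p ∈ cells n 1 A, (1 + c * (crossRatio a p)⁻¹) := by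
  rw [hA.sum_interlaced_above, prod_one_add, mul_sum]
  refine sum_congr rfl fun s hs => ?_
  rw [mem_powerset] at hs
  rw [hA.tightCount_above hs, shift_sub, weight_sub ha,
    weight_shift_cellInd ha (hs.trans (cells_subset _ _ _)), prod_mul_distrib, prod_const,
    prod_inv_distrib, pow_add]
  ring

end NonvanishingArray

end Weight

/-! ### Condensation -/

section Octahedron

variable {K : Type*} [Field K]

/-- One step of the octahedron recurrence: the condensation of `a` by its connected `2 × 2` minors
(with `c` in place of `-1`), divided by the interior of the previous array `b`. -/
def octahedron (c : K) (a b : ℕ → ℕ → K) (i j : ℕ) : K :=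
  (a i j * a (i + 1) (j + 1) + c * (a i (j + 1) * a (i + 1) j)) / b (i + 1) (j + 1)

open Classical in
/-- The generating function of interlaced pairs of height functions, the larger matrix being
weighted by `a` and the smaller one by the inverse of the interior of `b`. -/
noncomputable def interlacedSum (c : K) (m : ℕ) (a b : ℕ → ℕ → K) : K :=
  ∑ C ∈ heights (m + 1), ∑ B ∈ heights m with Interlaced B C,
    c ^ tightCount m B C * weight (m + 1) a C * (weight m (unshift b) B)⁻¹

section NonvanishingArray

variable {a : ℕ → ℕ → K} (ha : ∀ i j, a i j ≠ 0)
include ha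

theorem octahedron_eq_mul (c : K) (b : ℕ → ℕ → K) :
    octahedron c a b =
      a * unshift a * ((fun i j => 1 + c * (crossRatio a (i, j))⁻¹) * (unshift b)⁻¹) := by
  funext i j
  have := ha i j
  have := ha (i + 1) (j + 1)
  have := ha (i + 1) j
  have := ha i (j + 1)
  simp only [octahedron, crossRatio, unshift, Pi.mul_apply, Pi.inv_apply, div_eq_mul_inv _ (b _ _)]
  field_simp

theorem weight_octahedron {c : K} {b : ℕ → ℕ → K} (hab : ∀ i j, octahedron c a b i j ≠ 0) {m : ℕ}
    {A : ℕ → ℕ → ℤ} (hA : IsHeight (m + 1) A) :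
    weight (m + 1) (octahedron c a b) A *
        ∏ p ∈ cells (m + 1) (-1) A, (1 + c * (crossRatio a p)⁻¹) =
      weight (m + 2) a (shift (maxAbove A)) * weight m (unshift a) (minBelow A) *
        (∏ p ∈ cells (m + 1) 1 A, (1 + c * (crossRatio a p)⁻¹)) *
        (weight (m + 1) (unshift b) A)⁻¹ := by
  have factor_ne_zero : ∀ i j, 1 + c * (crossRatio a (i, j))⁻¹ ≠ 0 := by
    intro i j h
    refine hab i j ?_
    rw [octahedron_eq_mul ha]
    simp [h]
  rw [octahedron_eq_mul ha, weight_mul, weight_mul, weight_mul, weight_inv,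
    weight_mul_weight_unshift ha hA, ← weight_mul_prod_cells hA factor_ne_zero]
  ring

/-- Both sides are sums over triples `B, A, C` of successively interlaced height functions: summing
over the completions `C` above a fixed `A`, or over the completions `B` below it, produces one
factor per entry `1`, respectively `-1`, of the matrix of `A`. -/
theorem interlacedSum_succ {c : K} {b : ℕ → ℕ → K} (hab : ∀ i j, octahedron c a b i j ≠ 0)
    (m : ℕ) : interlacedSum c (m + 1) a b = interlacedSum c m (octahedron c a b) a := by
  classical
  simp only [interlacedSum]
  rw [sum_comm' (s' := fun A => (heights (m + 2)).filter (Interlaced A)) (t' := heights (m + 1))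
    (by intro C A; simp only [mem_filter]; tauto)]
  refine sum_congr rfl fun A hA => ?_
  rw [mem_heights] at hA
  calc
    _ = (∑ C ∈ heights (m + 2) with Interlaced A C,
          c ^ tightCount (m + 1) A C * weight (m + 2) a C) * (weight (m + 1) (unshift b) A)⁻¹ := by
      rw [sum_mul]
    _ = (∑ B ∈ heights m with Interlaced B A,
          c ^ tightCount m B A * (weight m (unshift a) B)⁻¹) *
          weight (m + 1) (octahedron c a b) A := by
      rw [sum_interlaced_above_weight ha c hA, sum_interlaced_below_weight ha c hA,
        mul_assoc _ (∏ p ∈ cells (m + 1) (-1) A, _), mul_comm (∏ p ∈ cells (m + 1) (-1) A, _),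
        weight_octahedron ha hab hA]
      have : weight m (unshift a) (minBelow A) ≠ 0 := weight_ne_zero (fun i j => ha _ _) m _
      field_simp
    _ = _ := by
      rw [sum_mul]
      exact sum_congr rfl fun B _ => by ring

end NonvanishingArray

theorem heights_of_le_one {n : ℕ} (hn : n ≤ 1) :
    heights n = {fun i j : ℕ => min (i : ℤ) j} := by
  ext H
  rw [mem_heights, mem_singleton]
  constructor
  · intro hH
    funext i j
    exact hH.eq_min (by omega)
  · rintro rfl
    exact ⟨fun _ => rfl, fun i j => by omega, fun i j => by omega⟩

theorem interlacedSum_zero (c : K) (a b : ℕ → ℕ → K) : interlacedSum c 0 a b = a 0 0 := by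
  have interlaced : Interlaced (fun i j : ℕ => min (i : ℤ) j) fun i j : ℕ => min (i : ℤ) j :=
    fun i j => by
      dsimp only
      omega
  simp [interlacedSum, heights_of_le_one, filter_singleton, interlaced, tightCount, weight, entry]

/-- Dodgson condensation with `c` in place of `-1`, started from the consecutive arrays `b` and `a`.
For `b = 1` it is the `λ`-determinant of Robbins and Rumsey, at `λ = c`, of the upper left `n × n`
block of `a`. -/
def condense (c : K) : ℕ → (ℕ → ℕ → K) → (ℕ → ℕ → K) → K
  | 0, _, b => b 0 0
  | n + 1, a, b => condense c n (octahedron c a b) a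

theorem condense_swap (c : K) (n : ℕ) (a b : ℕ → ℕ → K) :
    condense c n (Function.swap a) (Function.swap b) = condense c n a b := by
  induction n generalizing a b with
  | zero => rfl
  | succ n ih =>
    have swap_octahedron : octahedron c (Function.swap a) (Function.swap b) =
        Function.swap (octahedron c a b) := by
      funext i j
      simp only [octahedron, Function.swap]
      ring
    rw [condense, swap_octahedron, ih]
    rfl

theorem condense_reverse (c : K) {n : ℕ} {a b a' b' : ℕ → ℕ → K}
    (ha : ∀ i j k l, i + k + 1 = n → j + l + 1 = n → a' i j = a k l)
    (hb : ∀ i j k l, i + k = n → j + l = n → b' i j = b k l) :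
    condense c n a' b' = condense c n a b := by
  induction n generalizing a b a' b' with
  | zero => exact hb 0 0 0 0 rfl rfl
  | succ n ih =>
    refine ih (fun i j k l hi hj => ?_) fun i j k l hi hj => ha i j k l (by omega) (by omega)
    simp only [octahedron]
    rw [ha i j (k + 1) (l + 1) (by omega) (by omega), ha (i + 1) (j + 1) k l (by omega) (by omega),
      ha i (j + 1) (k + 1) l (by omega) (by omega), ha (i + 1) j k (l + 1) (by omega) (by omega),
      hb (i + 1) (j + 1) (k + 1) (l + 1) (by omega) (by omega)]
    ring

theorem condense_congr (c : K) {n : ℕ} {a b a' b' : ℕ → ℕ → K}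
    (ha : ∀ i j, i < n → j < n → a' i j = a i j) (hb : ∀ i j, i ≤ n → j ≤ n → b' i j = b i j) :
    condense c n a' b' = condense c n a b := by
  induction n generalizing a b a' b' with
  | zero => exact hb 0 0 le_rfl le_rfl
  | succ n ih =>
    refine ih (fun i j hi hj => ?_) fun i j hi hj => ha i j (by omega) (by omega)
    simp only [octahedron]
    rw [ha i j (by omega) (by omega), ha (i + 1) (j + 1) (by omega) (by omega),
      ha i (j + 1) (by omega) (by omega), ha (i + 1) j (by omega) (by omega),
      hb (i + 1) (j + 1) (by omega) (by omega)]

end Octahedron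

section Positive

variable {K : Type*} [Field K] [LinearOrder K] [IsStrictOrderedRing K] {c : K} (hc : 0 < c)
include hc

theorem octahedron_pos {a b : ℕ → ℕ → K} (ha : ∀ i j, 0 < a i j) (hb : ∀ i j, 0 < b i j)
    (i j : ℕ) : 0 < octahedron c a b i j :=
  div_pos (add_pos (mul_pos (ha _ _) (ha _ _)) (mul_pos hc (mul_pos (ha _ _) (ha _ _)))) (hb _ _)

theorem condense_succ_eq_interlacedSum (n : ℕ) {a b : ℕ → ℕ → K} (ha : ∀ i j, 0 < a i j)
    (hb : ∀ i j, 0 < b i j) : condense c (n + 1) a b = interlacedSum c n a b := by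
  induction n generalizing a b with
  | zero => exact (interlacedSum_zero c a b).symm
  | succ n ih =>
    rw [interlacedSum_succ (fun i j => (ha i j).ne') fun i j => (octahedron_pos hc ha hb i j).ne',
      ← ih (octahedron_pos hc ha hb) ha]
    rfl

theorem condense_one (n : ℕ) {a : ℕ → ℕ → K} (ha : ∀ i j, 0 < a i j) :
    condense c n a 1 =
      ∑ H ∈ heights n, c ^ flatCount n H * (c + 1) ^ (cells n (-1) H).card * weight n a H := by
  rcases n with _ | n
  · simp [condense, heights_of_le_one, flatCount, tightCount, cells, weight]
  classical
  have crossRatio_one : ∀ p, crossRatio (1 : ℕ → ℕ → K) p = 1 := by simp [crossRatio]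
  have weight_one : ∀ B, weight n (unshift (1 : ℕ → ℕ → K)) B = 1 := by simp [weight, unshift]
  rw [condense_succ_eq_interlacedSum hc n ha (b := 1) fun _ _ => zero_lt_one]
  refine sum_congr rfl fun H hH => ?_
  have sum_below := sum_interlaced_below_weight (a := 1) (by simp) c (mem_heights.1 hH)
  simp only [weight_one, crossRatio_one, inv_one, mul_one, prod_const, add_comm 1 c] at sum_below
  simp only [weight_one, inv_one, mul_one]
  rw [← sum_mul, sum_below]

theorem condense_mul_condense_unshift (n : ℕ) {a b : ℕ → ℕ → K} (ha : ∀ i j, 0 < a i j)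
    (hb : ∀ i j, 0 < b i j) :
    condense c (n + 2) a b * condense c n (unshift a) (unshift b) =
      condense c (n + 1) a b * condense c (n + 1) (unshift a) (unshift b) +
        c * (condense c (n + 1) (fun i j => a i (j + 1)) (fun i j => b i (j + 1)) *
          condense c (n + 1) (fun i j => a (i + 1) j) (fun i j => b (i + 1) j)) := by
  induction n generalizing a b with
  | zero => exact div_mul_cancel₀ _ (hb 1 1).ne'
  | succ _ ih => exact ih (octahedron_pos hc ha hb) ha

end Positive

/-! ### Statistics of alternating sign matrices -/

theorem card_filter_range_product (n : ℕ) (P : ℕ → ℕ → Prop) [∀ i j, Decidable (P i j)] :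
    ((range n ×ˢ range n).filter fun p => P p.1 p.2).card =
      ∑ i : Fin n, ∑ j : Fin n, if P i j then 1 else 0 := by
  rw [card_filter, sum_product, ← Fin.sum_univ_eq_sum_range]
  refine sum_congr rfl fun i _ => ?_
  exact (Fin.sum_univ_eq_sum_range (fun j => if P i j then 1 else 0) n).symm

theorem muASM_matOf (n : ℕ) (H : ℕ → ℕ → ℤ) : muASM (matOf n H) = (cells n (-1) H).card := by
  rw [cells, card_filter_range_product n fun i j => entry H i j = -1, muASM, card_filter,
    Fintype.sum_prod_type]
  rfl

section Statistics

variable {n : ℕ} {H : ℕ → ℕ → ℤ} (hH : IsHeight n H)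
include hH

theorem IsHeight.sum_tail_matOf (i : Fin n) {k : ℕ} (hk : k ≤ n) :
    ∑ y : Fin n, (if k ≤ y then matOf n H i y else 0) = 1 - (H (i + 1) k - H i k) := by
  have head : ∑ y : Fin n, (if (y : ℕ) < k then matOf n H i y else 0) = H (i + 1) k - H i k := by
    rw [← hH.sum_range_entry]
    refine (Fin.sum_univ_eq_sum_range (fun y => if y < k then entry H i y else 0) n).trans ?_
    rw [← sum_filter]
    congr 1
    grind
  rw [← hH.sum_matOf i, ← head, ← sum_sub_distrib]
  refine sum_congr rfl fun y _ => ?_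
  split_ifs <;> omega

theorem IsHeight.tail_mul_tail (i j : ℕ) :
    (1 - (H (i + 1) j - H i j)) * (1 - (H (i + 1) (j + 1) - H (i + 1) j)) =
      if H i j = H (i + 1) (j + 1) then 1 else 0 := by
  have row := hH.row i j
  have col := hH.col (i + 1) j
  rcases (by omega : H (i + 1) j = H i j ∨ H (i + 1) j = H i j + 1) with h | h <;>
    rcases (by omega : H (i + 1) (j + 1) = H (i + 1) j ∨ H (i + 1) (j + 1) = H (i + 1) j + 1)
      with h' | h' <;> grind

/-- Grouping the pairs `(i, j), (i', j')` by `(i, j')` turns `ν` into a sum of products of a row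
tail and a column tail, each of which is `0` or `1`. -/
theorem nuASM_matOf : nuASM (matOf n H) = flatCount n H := by
  have col_tail : ∀ i j : Fin n, ∑ x : Fin n, (if i < x then matOf n H x j else 0) =
      1 - (H (i + 1) (j + 1) - H (i + 1) j) := by
    intro i j
    have := hH.swap.sum_tail_matOf j (k := i + 1) i.isLt
    rwa [matOf_swap] at this
  have sum_eq_flatCount : ∑ i : Fin n, ∑ i' : Fin n, ∑ j : Fin n, ∑ j' : Fin n,
      (if i < i' ∧ j' ≤ j then matOf n H i j * matOf n H i' j' else 0) = (flatCount n H : ℤ) := by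
    rw [flatCount, tightCount, card_filter_range_product n fun i j => H i j = H (i + 1) (j + 1)]
    push_cast
    refine sum_congr rfl fun i _ => ?_
    calc
      _ = ∑ j' : Fin n, ∑ j : Fin n, ∑ i' : Fin n,
          (if j' ≤ j then matOf n H i j else 0) * (if i < i' then matOf n H i' j' else 0) := by
        rw [sum_congr rfl fun i' _ => sum_comm, sum_comm, sum_congr rfl fun j' _ => sum_comm]
        refine sum_congr rfl fun j' _ => sum_congr rfl fun j _ => sum_congr rfl fun i' _ => ?_
        rw [ite_zero_mul_ite_zero]
        simp only [and_comm]
      _ = ∑ j' : Fin n, (1 - (H (i + 1) j' - H i j')) *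
          (1 - (H (i + 1) (j' + 1) - H (i + 1) j')) := by
        refine sum_congr rfl fun j' _ => ?_
        rw [← sum_mul_sum, ← col_tail, ← hH.sum_tail_matOf i j'.isLt.le]
        rfl
      _ = _ := sum_congr rfl fun j' _ => hH.tail_mul_tail i j'
  rw [nuASM, sum_eq_flatCount, Int.toNat_natCast]

end Statistics

/-! ### Boundary weights -/

theorem exists_eq_ite_of_sum_eq_one {n : ℕ} {f : Fin n → ℤ} (hf : ∀ j, f j = 0 ∨ f j = 1)
    (hs : ∑ j, f j = 1) : ∃ k, ∀ j, f j = if j = k then 1 else 0 := by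
  obtain ⟨k, hk⟩ : ∃ k, f k = 1 := by
    by_contra! h
    rw [sum_eq_zero fun j _ => (hf j).resolve_right (h j)] at hs
    exact zero_ne_one hs
  refine ⟨k, fun j => ?_⟩
  split_ifs with h
  · rw [h, hk]
  · have rest : ∑ j ∈ univ.erase k, f j = 0 := by
      have := add_sum_erase univ f (mem_univ k)
      omega
    refine (sum_eq_zero_iff_of_nonneg fun i _ => ?_).1 rest j (mem_erase.2 ⟨h, mem_univ j⟩)
    have := hf i
    omega

section Boundary

variable {K : Type*} [Field K]

theorem prod_zpow_ite_eq (n : ℕ) (u : Fin n → K) (k : Fin n) :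
    ∏ j, u j ^ (if j = k then 1 else 0 : ℤ) = u k := by
  rw [prod_eq_single k (fun j _ hj => by simp [hj]) (by simp)]
  simp

theorem prod_zpow_eq_card_before (t : ℕ → K) {n : ℕ} {f : Fin n → ℤ}
    (hf : ∀ j, f j = 0 ∨ f j = 1) (hs : ∑ j, f j = 1) :
    ∏ j : Fin n, t j ^ f j =
      t (univ.filter fun j : Fin n => f j = 0 ∧ ∃ j', j < j' ∧ f j' = 1).card := by
  obtain ⟨k, hk⟩ := exists_eq_ite_of_sum_eq_one hf hs
  have filter_eq : (univ.filter fun j : Fin n => f j = 0 ∧ ∃ j', j < j' ∧ f j' = 1) = Iio k := by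
    ext j
    simp only [mem_filter, mem_univ, true_and, mem_Iio, hk]
    grind
  rw [filter_eq, Fin.card_Iio]
  simp only [hk]
  exact prod_zpow_ite_eq n (fun j => t j) k

theorem prod_zpow_eq_card_after (t : ℕ → K) {n : ℕ} {f : Fin n → ℤ}
    (hf : ∀ j, f j = 0 ∨ f j = 1) (hs : ∑ j, f j = 1) :
    ∏ j : Fin n, t (n - 1 - j) ^ f j =
      t (univ.filter fun j : Fin n => f j = 0 ∧ ∃ j', j' < j ∧ f j' = 1).card := by
  obtain ⟨k, hk⟩ := exists_eq_ite_of_sum_eq_one hf hs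
  have filter_eq : (univ.filter fun j : Fin n => f j = 0 ∧ ∃ j', j' < j ∧ f j' = 1) = Ioi k := by
    ext j
    simp only [mem_filter, mem_univ, true_and, mem_Ioi, hk]
    grind
  rw [filter_eq, Fin.card_Ioi]
  simp only [hk]
  exact prod_zpow_ite_eq n (fun j => t (n - 1 - j)) k

theorem weight_ite_row {n k : ℕ} (hk : k < n) (u : ℕ → K) (H : ℕ → ℕ → ℤ) :
    weight n (fun i j => if i = k then u j else 1) H = ∏ j : Fin n, u j ^ entry H k j := by
  rw [weight, prod_eq_single_of_mem k (mem_range.2 hk) fun i _ hi => by simp [hi],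
    ← Fin.prod_univ_eq_prod_range]
  simp only [if_true]

theorem weight_ite_col {n k : ℕ} (hk : k < n) (u : ℕ → K) (H : ℕ → ℕ → ℤ) :
    weight n (fun i j => if j = k then u i else 1) H = ∏ i : Fin n, u i ^ entry H i k := by
  rw [← weight_swap]
  simpa only [entry_swap] using weight_ite_row hk u (Function.swap H)

/-- The array of weights on the boundary of an `(m + 1) × (m + 1)` window: `t`, `r`, `b` and `l`
weight the top row, right column, bottom row and left column, each indexed from the end at which
the corresponding boundary statistic vanishes. -/
def frame (m : ℕ) (t r b l : ℕ → K) : ℕ → ℕ → K :=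
  (fun i j => if i = 0 then t j else 1) * (fun i j => if j = m then r (m - i) else 1) *
    (fun i j => if i = m then b (m - j) else 1) * fun i j => if j = 0 then l i else 1

theorem weight_frame {m : ℕ} (t r b l : ℕ → K) {H : ℕ → ℕ → ℤ} (hH : IsHeight (m + 1) H) :
    weight (m + 1) (frame m t r b l) H =
      t (rhoT (matOf (m + 1) H)) * r (rhoR (matOf (m + 1) H)) * b (rhoB (matOf (m + 1) H)) *
        l (rhoL (matOf (m + 1) H)) := by
  have row_sum := hH.sum_matOf
  have col_sum := hH.isASM_matOf.2.2.2.2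
  have left_cases : ∀ i, entry H i 0 = 0 ∨ entry H i 0 = 1 := by
    simpa only [entry_swap] using hH.swap.entry_zero_eq_zero_or_one
  have right_cases : ∀ i : Fin (m + 1), entry H i m = 0 ∨ entry H i m = 1 := fun i => by
    simpa only [entry_swap] using hH.swap.entry_last_eq_zero_or_one (Nat.lt_succ_iff.1 i.isLt)
  have bottom_cases : ∀ j : Fin (m + 1), entry H m j = 0 ∨ entry H m j = 1 := fun j =>
    hH.entry_last_eq_zero_or_one (Nat.lt_succ_iff.1 j.isLt)
  rw [frame, weight_mul, weight_mul, weight_mul, weight_ite_row m.succ_pos,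
    weight_ite_col m.lt_succ_self fun i => r (m - i),
    weight_ite_row m.lt_succ_self fun j => b (m - j), weight_ite_col m.succ_pos]
  congr 1
  · congr 1
    · congr 1
      · exact prod_zpow_eq_card_before t (fun j => hH.entry_zero_eq_zero_or_one j) (row_sum 0)
      · exact prod_zpow_eq_card_after r right_cases (col_sum (Fin.last m))
    · exact prod_zpow_eq_card_after b bottom_cases (row_sum (Fin.last m))
  · exact prod_zpow_eq_card_before l (fun i => left_cases i) (col_sum 0)

theorem condense_frame_swap (c : K) (m : ℕ) (t r b l : ℕ → K) :
    condense c (m + 1) (frame m l b r t) 1 = condense c (m + 1) (frame m t r b l) 1 := by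
  have swap_frame : frame m l b r t = Function.swap (frame m t r b l) := by
    funext i j
    simp only [frame, Function.swap, Pi.mul_apply]
    ring
  rw [swap_frame]
  exact condense_swap c (m + 1) _ 1

theorem condense_frame_reverse (c : K) (m : ℕ) (t r b l : ℕ → K) :
    condense c (m + 1) (frame m b l t r) 1 = condense c (m + 1) (frame m t r b l) 1 := by
  refine condense_reverse c (fun i j i' j' hi hj => ?_) fun _ _ _ _ _ _ => rfl
  obtain rfl : i' = m - i := by omega
  obtain rfl : j' = m - j := by omega
  simp only [frame, Pi.mul_apply, show m - i = 0 ↔ i = m by omega, show m - i = m ↔ i = 0 by omega,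
    show m - j = 0 ↔ j = m by omega, show m - j = m ↔ j = 0 by omega,
    show m - (m - i) = i by omega, show m - (m - j) = j by omega]
  ring

theorem one_pow_eq_one : (fun k : ℕ => (1 : K) ^ k) = 1 := funext one_pow

end Boundary

theorem Zqua_eq_sum_heights {R : Type*} [CommRing R] (n : ℕ) (x y z₁ z₂ z₃ z₄ : R) :
    Zqua n x y z₁ z₂ z₃ z₄ =
      ∑ H ∈ heights n, x ^ nuASM (matOf n H) * y ^ muASM (matOf n H) * z₁ ^ rhoT (matOf n H) *
        z₂ ^ rhoR (matOf n H) * z₃ ^ rhoB (matOf n H) * z₄ ^ rhoL (matOf n H) :=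
  sum_isASM_eq_sum_heights n fun A =>
    x ^ nuASM A * y ^ muASM A * z₁ ^ rhoT A * z₂ ^ rhoR A * z₃ ^ rhoB A * z₄ ^ rhoL A

section PositiveBoundary

variable {K : Type*} [Field K] [LinearOrder K] [IsStrictOrderedRing K]

theorem frame_pos (m : ℕ) {t r b l : ℕ → K} (ht : ∀ k, 0 < t k) (hr : ∀ k, 0 < r k)
    (hb : ∀ k, 0 < b k) (hl : ∀ k, 0 < l k) (i j : ℕ) : 0 < frame m t r b l i j := by
  have ite_pos : ∀ {p : Prop} [Decidable p] {x : K}, 0 < x → 0 < if p then x else 1 := by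
    intro p _ x hx
    split_ifs
    exacts [hx, one_pos]
  exact mul_pos (mul_pos (mul_pos (ite_pos (ht j)) (ite_pos (hr _))) (ite_pos (hb _)))
    (ite_pos (hl i))

variable {c : K} (hc : 0 < c)
include hc

theorem condense_one_one (n : ℕ) : condense c n 1 1 = Zun n c (c + 1) := by
  have weight_one : ∀ H, weight n (1 : ℕ → ℕ → K) H = 1 := by simp [weight]
  rw [condense_one hc n (a := 1) fun _ _ => zero_lt_one, Zun, Zqua_eq_sum_heights]
  refine sum_congr rfl fun H hH => ?_
  rw [nuASM_matOf (mem_heights.1 hH), muASM_matOf, weight_one]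
  simp only [one_pow, mul_one]

section Functions

variable {t r b l : ℕ → K} (ht : ∀ k, 0 < t k) (hr : ∀ k, 0 < r k) (hb : ∀ k, 0 < b k)
  (hl : ∀ k, 0 < l k)
include ht hr hb hl

theorem condense_frame (m : ℕ) :
    condense c (m + 1) (frame m t r b l) 1 =
      ∑ H ∈ heights (m + 1), c ^ nuASM (matOf (m + 1) H) * (c + 1) ^ muASM (matOf (m + 1) H) *
        (t (rhoT (matOf (m + 1) H)) * r (rhoR (matOf (m + 1) H)) * b (rhoB (matOf (m + 1) H)) *
          l (rhoL (matOf (m + 1) H))) := by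
  rw [condense_one hc (m + 1) (frame_pos m ht hr hb hl)]
  refine sum_congr rfl fun H hH => ?_
  rw [mem_heights] at hH
  rw [weight_frame t r b l hH, nuASM_matOf hH, muASM_matOf]

theorem condense_frame_smul (m : ℕ) {u v : K} (hu : 0 < u) (hv : 0 < v) :
    condense c (m + 1) (frame m (u • t) (v • r) b l) 1 =
      u * v * condense c (m + 1) (frame m t r b l) 1 := by
  rw [condense_frame hc (t := u • t) (r := v • r) (fun k => mul_pos hu (ht k))
    (fun k => mul_pos hv (hr k)) hb hl, condense_frame hc ht hr hb hl, mul_sum]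
  refine sum_congr rfl fun H _ => ?_
  simp only [Pi.smul_apply, smul_eq_mul]
  ring

theorem condense_frame_mul_condense_one (n : ℕ) :
    condense c (n + 2) (frame (n + 1) t r b l) 1 * condense c n 1 1 =
      condense c (n + 1) (frame n t 1 1 l) 1 * condense c (n + 1) (frame n 1 r b 1) 1 +
        c * (condense c (n + 1) (frame n (fun k => t (k + 1)) (fun k => r (k + 1)) 1 1) 1 *
          condense c (n + 1) (frame n 1 1 (fun k => b (k + 1)) fun k => l (k + 1)) 1) := by
  have desnanot_jacobi := condense_mul_condense_unshift hc n (frame_pos (n + 1) ht hr hb hl)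
    (b := 1) fun _ _ => zero_lt_one
  convert desnanot_jacobi using 1
  · congr 1
    refine condense_congr c (fun i j hi hj => ?_) fun _ _ _ _ => rfl
    simp [frame, unshift, hi.ne, hj.ne]
  · congr 2
    · refine condense_congr c (fun i j hi hj => ?_) fun _ _ _ _ => rfl
      simp [frame, hi.ne, hj.ne]
    · refine condense_congr c (fun i j _ _ => ?_) fun _ _ _ _ => rfl
      simp [frame, unshift]
    · congr 1
      · refine condense_congr c (fun i j hi _ => ?_) fun _ _ _ _ => rfl
        simp [frame, hi.ne, Nat.sub_add_comm (Nat.lt_succ_iff.1 hi)]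
      · refine condense_congr c (fun i j _ hj => ?_) fun _ _ _ _ => rfl
        simp [frame, hj.ne, Nat.sub_add_comm (Nat.lt_succ_iff.1 hj)]

end Functions

theorem condense_frame_pow (m : ℕ) {z₁ z₂ z₃ z₄ : K} (h₁ : 0 < z₁) (h₂ : 0 < z₂) (h₃ : 0 < z₃)
    (h₄ : 0 < z₄) :
    condense c (m + 1) (frame m (z₁ ^ ·) (z₂ ^ ·) (z₃ ^ ·) (z₄ ^ ·)) 1 =
      Zqua (m + 1) c (c + 1) z₁ z₂ z₃ z₄ := by
  rw [condense_frame hc (pow_pos h₁) (pow_pos h₂) (pow_pos h₃) (pow_pos h₄), Zqua_eq_sum_heights]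
  exact sum_congr rfl fun H _ => by ring

theorem condense_frame_pow_left (m : ℕ) {z₁ z₂ : K} (h₁ : 0 < z₁) (h₂ : 0 < z₂) :
    condense c (m + 1) (frame m (z₁ ^ ·) 1 1 (z₂ ^ ·)) 1 = Zadj (m + 1) c (c + 1) z₁ z₂ := by
  rw [← one_pow_eq_one, condense_frame_pow hc m h₁ zero_lt_one zero_lt_one h₂, Zadj]

theorem condense_frame_pow_succ_right (m : ℕ) {z₁ z₂ : K} (h₁ : 0 < z₁) (h₂ : 0 < z₂) :
    condense c (m + 1) (frame m (fun k => z₁ ^ (k + 1)) (fun k => z₂ ^ (k + 1)) 1 1) 1 =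
      z₁ * z₂ * Zbaradj (m + 1) c (c + 1) z₁ z₂ := by
  have pow_succ_eq_smul : ∀ z : K, (fun k => z ^ (k + 1)) = z • fun k => z ^ k := fun z =>
    funext (pow_succ' z)
  have one_pos : ∀ k, 0 < (1 : ℕ → K) k := fun _ => zero_lt_one
  rw [pow_succ_eq_smul, pow_succ_eq_smul,
    condense_frame_smul hc (t := (z₁ ^ ·)) (pow_pos h₁) (pow_pos h₂) one_pos one_pos m h₁ h₂,
    ← one_pow_eq_one, condense_frame_pow hc m h₁ h₂ zero_lt_one zero_lt_one, Zbaradj]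

end PositiveBoundary

/-! ### The quadratic relation -/

theorem Zqua_mul_Zun_of_pos {K : Type*} [Field K] [LinearOrder K] [IsStrictOrderedRing K]
    {x z₁ z₂ z₃ z₄ : K} (hx : 0 < x) (h₁ : 0 < z₁) (h₂ : 0 < z₂) (h₃ : 0 < z₃) (h₄ : 0 < z₄)
    (n : ℕ) :
    Zqua (n + 2) x (x + 1) z₁ z₂ z₃ z₄ * Zun n x (x + 1) =
      Zadj (n + 1) x (x + 1) z₄ z₁ * Zadj (n + 1) x (x + 1) z₂ z₃ +
        x * z₁ * z₂ * z₃ * z₄ *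
          Zbaradj (n + 1) x (x + 1) z₁ z₂ * Zbaradj (n + 1) x (x + 1) z₃ z₄ := by
  have top_left : condense x (n + 1) (frame n (z₁ ^ ·) 1 1 (z₄ ^ ·)) 1 =
      Zadj (n + 1) x (x + 1) z₄ z₁ := by
    rw [← condense_frame_swap, condense_frame_pow_left hx n h₄ h₁]
  have bottom_right : condense x (n + 1) (frame n 1 (z₂ ^ ·) (z₃ ^ ·) 1) 1 =
      Zadj (n + 1) x (x + 1) z₂ z₃ := by
    rw [← condense_frame_swap, ← condense_frame_reverse, condense_frame_pow_left hx n h₂ h₃]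
  have top_right := condense_frame_pow_succ_right hx n h₁ h₂
  have bottom_left := condense_frame_pow_succ_right hx n h₃ h₄
  rw [← condense_frame_reverse] at bottom_left
  have desnanot_jacobi := condense_frame_mul_condense_one hx (pow_pos h₁) (pow_pos h₂)
    (pow_pos h₃) (pow_pos h₄) n
  rw [condense_one_one hx, condense_frame_pow hx (n + 1) h₁ h₂ h₃ h₄, top_left, bottom_right,
    top_right, bottom_left] at desnanot_jacobi
  rw [desnanot_jacobi]
  ring

theorem map_Zqua {R S F : Type*} [CommRing R] [CommRing S] [FunLike F R S] [RingHomClass F R S]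
    (f : F) (n : ℕ) (x y z₁ z₂ z₃ z₄ : R) :
    f (Zqua n x y z₁ z₂ z₃ z₄) = Zqua n (f x) (f y) (f z₁) (f z₂) (f z₃) (f z₄) := by
  simp only [Zqua, map_sum, apply_ite f, map_mul, map_pow, map_zero]

theorem mvPolynomial_int_eq_of_aeval_eq_of_pos {σ : Type*} {p q : MvPolynomial σ ℤ}
    (h : ∀ v : σ → ℚ, (∀ i, 0 < v i) → MvPolynomial.aeval v p = MvPolynomial.aeval v q) :
    p = q := by
  refine MvPolynomial.funext_set (fun _ => Set.Ioi 0) (fun _ => Set.Ioi_infinite 0) fun v hv => ?_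
  have cast_eq := h (algebraMap ℤ ℚ ∘ v) fun i => Int.cast_pos.2 (hv i trivial)
  rw [MvPolynomial.aeval_algebraMap_apply, MvPolynomial.aeval_algebraMap_apply] at cast_eq
  exact Int.cast_injective cast_eq

open MvPolynomial in
theorem Zqua_mul_Zun_mvPolynomial (n : ℕ) :
    Zqua (n + 2) (X 0 : MvPolynomial (Fin 5) ℤ) (X 0 + 1) (X 1) (X 2) (X 3) (X 4) *
        Zun n (X 0) (X 0 + 1) =
      Zadj (n + 1) (X 0) (X 0 + 1) (X 4) (X 1) * Zadj (n + 1) (X 0) (X 0 + 1) (X 2) (X 3) +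
        X 0 * X 1 * X 2 * X 3 * X 4 *
          Zbaradj (n + 1) (X 0) (X 0 + 1) (X 1) (X 2) *
          Zbaradj (n + 1) (X 0) (X 0 + 1) (X 3) (X 4) := by
  refine mvPolynomial_int_eq_of_aeval_eq_of_pos fun v hv => ?_
  have relation := Zqua_mul_Zun_of_pos (hv 0) (hv 1) (hv 2) (hv 3) (hv 4) n
  simpa only [Zun, Zadj, Zbaradj, map_mul, map_add, map_Zqua, aeval_X, map_one] using relation

/-- Quadratic relation for the quadruply-refined ASM generating function at
`y = x + 1`, stated for all values of the variables in any commutative ring,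
equivalently as an identity of polynomials in `ℤ[x,z1,z2,z3,z4]`. -/
theorem stmt12 {R : Type*} [CommRing R] (x z1 z2 z3 z4 : R) (n : ℕ) (hn : 3 ≤ n) :
    Zqua n x (x + 1) z1 z2 z3 z4 * Zun (n - 2) x (x + 1) =
      Zadj (n - 1) x (x + 1) z4 z1 * Zadj (n - 1) x (x + 1) z2 z3
      + x * z1 * z2 * z3 * z4 *
          Zbaradj (n - 1) x (x + 1) z1 z2 * Zbaradj (n - 1) x (x + 1) z3 z4 := by
  obtain ⟨n, rfl⟩ := Nat.exists_eq_add_of_le' (Nat.le_of_succ_le hn)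
  let φ := MvPolynomial.aeval (R := ℤ) ![x, z1, z2, z3, z4]
  have relation := congrArg φ (Zqua_mul_Zun_mvPolynomial n)
  simp only [φ, Zun, Zadj, Zbaradj, map_mul, map_add, map_Zqua, MvPolynomial.aeval_X, map_one,
    Matrix.cons_val] at relation
  exact relation
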